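/- arXiv:2411.18773 — 2 statements merged into one kernel-verified Lean document; each statement's English description precedes it below -/
import Mathlib

section
/- Let A be an l×r real matrix, B an r×d real matrix, and M a d×K real matrix. Then A B M = V_{B^⊤, l}^⊤ (I_d ⊗ vec(A^⊤) vec(M)^⊤) V_{I_d, K}, where vec(A^⊤) vec(M)^⊤ denotes the (rl)×(dK) outer-product matrix. -/
open Matrix
open scoped Kronecker

noncomputable section

/-- `vec` of a matrix: the column vector obtained by stacking the columns of `M`
on top of one another.  With product-type indexing, `mvec M (j, i) = M i j`. -/
def mvec {m n : Type*} (M : Matrix m n ℝ) : n × m → ℝ := fun p => M p.2 p.1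

/-- A vector viewed as a column matrix. -/
def colMat {m : Type*} (v : m → ℝ) : Matrix m Unit ℝ := Matrix.of fun i _ => v i

/-- `V_{H,K}`: the matrix obtained by stacking vertically the blocks `I_K ⊗ h_i`,
where `h_i` is the `i`-th row of `H` viewed as a column vector. -/
def VHK {n d : Type*} (K : ℕ) (H : Matrix n d ℝ) :
    Matrix (n × (Fin K × d)) (Fin K) ℝ :=
  Matrix.of fun pr q =>
    ((1 : Matrix (Fin K) (Fin K) ℝ) ⊗ₖ colMat (fun i => H pr.1 i)) pr.2 (q, ())

/-- Remark S.1: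
`A B M = V_{Bᵀ,l}ᵀ (I_d ⊗ vec(Aᵀ) vec(M)ᵀ) V_{I_d,K}`. -/
theorem statement1 (l r d K : ℕ) (hl : 0 < l) (hr : 0 < r) (hd : 0 < d) (hK : 0 < K)
    (A : Matrix (Fin l) (Fin r) ℝ) (B : Matrix (Fin r) (Fin d) ℝ)
    (M : Matrix (Fin d) (Fin K) ℝ) :
    A * B * M =
      (VHK l Bᵀ)ᵀ *
        ((1 : Matrix (Fin d) (Fin d) ℝ) ⊗ₖ Matrix.vecMulVec (mvec Aᵀ) (mvec M)) *
        VHK K (1 : Matrix (Fin d) (Fin d) ℝ) := by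
  ext i k
  simp only [mul_apply, transpose_apply, Fintype.sum_prod_type, VHK, mvec, colMat, of_apply,
    kroneckerMap_apply, vecMulVec_apply, one_apply, ite_mul, mul_ite, one_mul, zero_mul, mul_one,
    mul_zero, Finset.sum_ite_eq, Finset.sum_ite_eq', Finset.sum_ite_irrel, Finset.sum_const_zero,
    Finset.mem_univ, if_true, Finset.sum_mul]
  refine Finset.sum_congr rfl fun j _ => Finset.sum_congr rfl fun s _ => ?_
  ring
end
end

section
/- Suppose the r×r matrix X^⊤ B^ν (B^ν)^⊤ X is invertible. Then for every φ ∈ ℝ^L, B^⊤ X_{β(φ)} vec(I_d) = Ξ (y^ν − Y_W φ); consequently, B^⊤ y − B^⊤ V φ − B^⊤ X_{β(φ)} vec(I_d) = (B^⊤ y − Ξ y^ν) − (B^⊤ V − Ξ Y_W) φ. -/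
open Matrix
open scoped Kronecker

noncomputable section

/-- A vector viewed as a row matrix. -/
def rowMat {n : Type*} (v : n → ℝ) : Matrix Unit n ℝ := Matrix.of fun _ j => v j

/-- `B̄ := T⁻¹ Σ_t B_t`. -/
def Bbar {d T v : ℕ} (B : Fin T → Matrix (Fin d) (Fin v) ℝ) :
    Matrix (Fin d) (Fin v) ℝ :=
  (T : ℝ)⁻¹ • ∑ t, B t

/-- `B^ν`: the vertical stack of the blocks `B_t − B̄`. -/
def Bnu {d T v : ℕ} (B : Fin T → Matrix (Fin d) (Fin v) ℝ) :
    Matrix (Fin T × Fin d) (Fin v) ℝ :=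
  Matrix.of fun q s => (B q.1 - Bbar B) q.2 s

/-- `X`: the vertical stack of the matrices `X_t`. -/
def Xstack {d T r : ℕ} (X : Fin T → Matrix (Fin d) (Fin r) ℝ) :
    Matrix (Fin T × Fin d) (Fin r) ℝ :=
  Matrix.of fun q s => X q.1 q.2 s

/-- The vertical stack `(w_1ᵀ, …, w_Tᵀ)ᵀ ∈ ℝ^{Td}` (used for `y^ν`, `ε^ν`). -/
def enu {d T : ℕ} (w : Fin T → Fin d → ℝ) : Fin T × Fin d → ℝ := fun q => w q.1 q.2

/-- `vec((w_1, …, w_T)ᵀ) ∈ ℝ^{Td}` (used for the vectorized `y` and `ε`). -/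
def yvec {d T : ℕ} (w : Fin T → Fin d → ℝ) : Fin d × Fin T → ℝ := fun q => w q.2 q.1

/-- The `r × r` matrix `Xᵀ B^ν (B^ν)ᵀ X`. -/
def Gram {d T r v : ℕ} (X : Fin T → Matrix (Fin d) (Fin r) ℝ)
    (B : Fin T → Matrix (Fin d) (Fin v) ℝ) : Matrix (Fin r) (Fin r) ℝ :=
  (Xstack X)ᵀ * Bnu B * (Bnu B)ᵀ * Xstack X

/-- The profiled least-squares coefficient `β(φ)`. -/
def betaOf {d T p r v : ℕ} (l : Fin p → ℕ) (W : Fin p → Matrix (Fin d) (Fin d) ℝ)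
    (z : Fin T → (j : Fin p) → Fin (l j + 1) → ℝ)
    (y : Fin T → Fin d → ℝ) (X : Fin T → Matrix (Fin d) (Fin r) ℝ)
    (B : Fin T → Matrix (Fin d) (Fin v) ℝ)
    (φ : ((j : Fin p) × Fin (l j + 1)) → ℝ) : Fin r → ℝ :=
  ((Gram X B)⁻¹ * (Xstack X)ᵀ * Bnu B * (Bnu B)ᵀ).mulVec
    (enu y - ∑ jk : (j : Fin p) × Fin (l j + 1),
      φ jk • ((1 : Matrix (Fin T) (Fin T) ℝ) ⊗ₖ W jk.1).mulVec
        (fun q : Fin T × Fin d => z q.1 jk.1 jk.2 * y q.1 q.2))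

/-- `(I_T ⊗ γᵀ)(B₁ − B̄, …, B_T − B̄)ᵀ`, a `T × d` matrix. -/
def Gmat {d T v : ℕ} (B : Fin T → Matrix (Fin d) (Fin v) ℝ) (γ : Fin v → ℝ) :
    Matrix (Fin T) (Fin d) ℝ :=
  Matrix.submatrix (((1 : Matrix (Fin T) (Fin T) ℝ) ⊗ₖ rowMat γ) *
      (Matrix.of fun i (q : Fin T × Fin v) => (B q.1 - Bbar B) i q.2)ᵀ)
    (fun t => (t, ())) id

/-- `B := κ · I_d ⊗ {(I_T ⊗ γᵀ)(B₁ − B̄, …, B_T − B̄)ᵀ}`, a `(Td) × d²` matrix. -/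
def augB {d T v : ℕ} (B : Fin T → Matrix (Fin d) (Fin v) ℝ) (γ : Fin v → ℝ)
    (κ : ℝ) : Matrix (Fin d × Fin T) (Fin d × Fin d) ℝ :=
  κ • ((1 : Matrix (Fin d) (Fin d) ℝ) ⊗ₖ Gmat B γ)

/-- `X_c := I_d ⊗ {(I_T ⊗ cᵀ)(X₁, …, X_T)ᵀ}`, a `(Td) × d²` matrix. -/
def augX {d T r : ℕ} (X : Fin T → Matrix (Fin d) (Fin r) ℝ) (c : Fin r → ℝ) :
    Matrix (Fin d × Fin T) (Fin d × Fin d) ℝ :=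
  (1 : Matrix (Fin d) (Fin d) ℝ) ⊗ₖ
    Matrix.submatrix (((1 : Matrix (Fin T) (Fin T) ℝ) ⊗ₖ rowMat c) *
        (Matrix.of fun i (q : Fin T × Fin r) => X q.1 i q.2)ᵀ)
      (fun t => (t, ())) id

/-- `vec(I_d)`. -/
def vecId (d : ℕ) : Fin d × Fin d → ℝ := mvec (1 : Matrix (Fin d) (Fin d) ℝ)

/-- `X_t ⊗ (B_t − B̄)γ`, a `d² × r` matrix. -/
def kronXB {d T r v : ℕ} (X : Fin T → Matrix (Fin d) (Fin r) ℝ)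
    (B : Fin T → Matrix (Fin d) (Fin v) ℝ) (γ : Fin v → ℝ) (t : Fin T) :
    Matrix (Fin d × Fin d) (Fin r) ℝ :=
  Matrix.submatrix ((X t) ⊗ₖ colMat ((B t - Bbar B).mulVec γ)) id (fun s => (s, ()))

/-- `Ξ := κ (Σ_t X_t ⊗ (B_t − B̄)γ)(Xᵀ B^ν (B^ν)ᵀ X)⁻¹ Xᵀ B^ν (B^ν)ᵀ`. -/
def Xi {d T r v : ℕ} (X : Fin T → Matrix (Fin d) (Fin r) ℝ)
    (B : Fin T → Matrix (Fin d) (Fin v) ℝ) (γ : Fin v → ℝ) (κ : ℝ) :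
    Matrix (Fin d × Fin d) (Fin T × Fin d) ℝ :=
  κ • ((∑ t, kronXB X B γ t) * (Gram X B)⁻¹ * (Xstack X)ᵀ * Bnu B * (Bnu B)ᵀ)

/-- `Γ_{j,k} := I_d ⊗ (z_{j,k,1} y_1, …, z_{j,k,T} y_T)ᵀ` (for weights `w t = z_{j,k,t}`). -/
def Gamma {d T : ℕ} (w : Fin T → ℝ) (y : Fin T → Fin d → ℝ) :
    Matrix (Fin d × Fin T) (Fin d × Fin d) ℝ :=
  (1 : Matrix (Fin d) (Fin d) ℝ) ⊗ₖ Matrix.of fun t i => w t * y t i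

/-- `V`: the `(Td) × L` matrix whose `(j,k)`-th column is `Γ_{j,k} vec(W_jᵀ)`. -/
def Vmat {d T p : ℕ} (l : Fin p → ℕ) (W : Fin p → Matrix (Fin d) (Fin d) ℝ)
    (z : Fin T → (j : Fin p) → Fin (l j + 1) → ℝ) (y : Fin T → Fin d → ℝ) :
    Matrix (Fin d × Fin T) ((j : Fin p) × Fin (l j + 1)) ℝ :=
  Matrix.of fun q c => (Gamma (fun t => z t c.1 c.2) y).mulVec (mvec (W c.1)ᵀ) q

/-- `Y_W`: the `(Td) × L` matrix whose `(j,k)`-th column is `(I_T ⊗ W_j) y^ν_{j,k}`. -/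
def YW {d T p : ℕ} (l : Fin p → ℕ) (W : Fin p → Matrix (Fin d) (Fin d) ℝ)
    (z : Fin T → (j : Fin p) → Fin (l j + 1) → ℝ) (y : Fin T → Fin d → ℝ) :
    Matrix (Fin T × Fin d) ((j : Fin p) × Fin (l j + 1)) ℝ :=
  Matrix.of fun q c =>
    ((1 : Matrix (Fin T) (Fin T) ℝ) ⊗ₖ W c.1).mulVec
      (fun q' : Fin T × Fin d => z q'.1 c.1 c.2 * y q'.1 q'.2) q

/-- `Y_W φ` is the combination of the columns of `Y_W` with weights `φ`. -/
theorem YW_mulVec {d T p : ℕ} (l : Fin p → ℕ) (W : Fin p → Matrix (Fin d) (Fin d) ℝ)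
    (z : Fin T → (j : Fin p) → Fin (l j + 1) → ℝ) (y : Fin T → Fin d → ℝ)
    (φ : ((j : Fin p) × Fin (l j + 1)) → ℝ) :
    (YW l W z y).mulVec φ = ∑ jk : (j : Fin p) × Fin (l j + 1),
      φ jk • ((1 : Matrix (Fin T) (Fin T) ℝ) ⊗ₖ W jk.1).mulVec
        (fun q : Fin T × Fin d => z q.1 jk.1 jk.2 * y q.1 q.2) := by
  ext q
  rw [Finset.sum_apply]
  exact Finset.sum_congr rfl fun jk _ => mul_comm _ _

/-- Multiplying `I_T ⊗ cᵀ` by a horizontal stack, transposed, applies each block to `c`. -/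
theorem one_kronecker_rowMat_mul_apply {d T r : ℕ} (A : Fin T → Matrix (Fin d) (Fin r) ℝ)
    (c : Fin r → ℝ) (t : Fin T) (i : Fin d) :
    (((1 : Matrix (Fin T) (Fin T) ℝ) ⊗ₖ rowMat c) *
      (Matrix.of fun i (q : Fin T × Fin r) => A q.1 i q.2)ᵀ) (t, ()) i
      = (A t).mulVec c i := by
  simp [Matrix.mul_apply, Fintype.sum_prod_type, Matrix.one_apply, rowMat, Matrix.mulVec,
    dotProduct, mul_comm]

theorem Gmat_apply {d T v : ℕ} (B : Fin T → Matrix (Fin d) (Fin v) ℝ) (γ : Fin v → ℝ)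
    (t : Fin T) (i : Fin d) : Gmat B γ t i = (B t - Bbar B).mulVec γ i :=
  one_kronecker_rowMat_mul_apply (fun t => B t - Bbar B) γ t i

/-- `X_c vec(I_d)` stacks the entries of the vectors `X_t c`. -/
theorem augX_mulVec_vecId {d T r : ℕ} (X : Fin T → Matrix (Fin d) (Fin r) ℝ)
    (c : Fin r → ℝ) : (augX X c).mulVec (vecId d) = yvec fun t => (X t).mulVec c := by
  ext ⟨i, t⟩
  simp only [augX, Matrix.mulVec, dotProduct, Fintype.sum_prod_type, Matrix.kroneckerMap_apply,
    Matrix.submatrix_apply, one_kronecker_rowMat_mul_apply]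
  simp [vecId, mvec, yvec, Matrix.one_apply, Matrix.mulVec, dotProduct]

/-- `Bᵀ X_c vec(I_d) = κ (Σ_t X_t ⊗ (B_t − B̄)γ) c`. -/
theorem augB_transpose_mulVec_augX {d T r v : ℕ} (X : Fin T → Matrix (Fin d) (Fin r) ℝ)
    (B : Fin T → Matrix (Fin d) (Fin v) ℝ) (γ : Fin v → ℝ) (κ : ℝ) (c : Fin r → ℝ) :
    (augB B γ κ)ᵀ.mulVec ((augX X c).mulVec (vecId d))
      = κ • (∑ t, kronXB X B γ t).mulVec c := by
  rw [augX_mulVec_vecId, augB, Matrix.transpose_smul, Matrix.smul_mulVec, Matrix.sum_mulVec]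
  congr 1
  ext ⟨i, j⟩
  rw [Finset.sum_apply]
  have hkron (t : Fin T) : (kronXB X B γ t).mulVec c (i, j)
      = (B t - Bbar B).mulVec γ j * (X t).mulVec c i := by
    simp only [kronXB, colMat, Matrix.mulVec, dotProduct, Matrix.submatrix_apply, id,
      Matrix.kroneckerMap_apply, Matrix.of_apply]
    rw [Finset.mul_sum]
    exact Finset.sum_congr rfl fun s _ => by ring
  simp only [hkron]
  rw [Matrix.mulVec, dotProduct, Fintype.sum_prod_type]
  simp [Matrix.one_apply, Gmat_apply, yvec]

/-- simplify_LASSO: `Bᵀ X_{β(φ)} vec(I_d) = Ξ (y^ν − Y_W φ)`;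
consequently `Bᵀy − BᵀV φ − Bᵀ X_{β(φ)} vec(I_d)
  = (Bᵀy − Ξ y^ν) − (BᵀV − Ξ Y_W) φ`. -/
theorem statement9 (d T p r v : ℕ) (hd : 0 < d) (hT : 0 < T) (hp : 0 < p)
    (hr : 0 < r) (hv : 0 < v)
    (l : Fin p → ℕ) (W : Fin p → Matrix (Fin d) (Fin d) ℝ)
    (z : Fin T → (j : Fin p) → Fin (l j + 1) → ℝ) (hz : ∀ t j, z t j 0 = 1)
    (y : Fin T → Fin d → ℝ) (X : Fin T → Matrix (Fin d) (Fin r) ℝ)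
    (B : Fin T → Matrix (Fin d) (Fin v) ℝ) (γ : Fin v → ℝ) (κ : ℝ)
    (hGram : IsUnit (Gram X B))
    (φ : ((j : Fin p) × Fin (l j + 1)) → ℝ) :
    (augB B γ κ)ᵀ.mulVec ((augX X (betaOf l W z y X B φ)).mulVec (vecId d))
        = (Xi X B γ κ).mulVec (enu y - (YW l W z y).mulVec φ)
    ∧ (augB B γ κ)ᵀ.mulVec (yvec y) - ((augB B γ κ)ᵀ * Vmat l W z y).mulVec φ
        - (augB B γ κ)ᵀ.mulVec ((augX X (betaOf l W z y X B φ)).mulVec (vecId d))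
      = ((augB B γ κ)ᵀ.mulVec (yvec y) - (Xi X B γ κ).mulVec (enu y))
        - ((augB B γ κ)ᵀ * Vmat l W z y - Xi X B γ κ * YW l W z y).mulVec φ := by
  have hβ : betaOf l W z y X B φ = ((Gram X B)⁻¹ * (Xstack X)ᵀ * Bnu B * (Bnu B)ᵀ).mulVec
      (enu y - (YW l W z y).mulVec φ) := by
    rw [betaOf, YW_mulVec]
  have key : (augB B γ κ)ᵀ.mulVec ((augX X (betaOf l W z y X B φ)).mulVec (vecId d))
      = (Xi X B γ κ).mulVec (enu y - (YW l W z y).mulVec φ) := by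
    rw [augB_transpose_mulVec_augX, hβ, Xi, Matrix.smul_mulVec, Matrix.mulVec_mulVec]
    simp only [Matrix.mul_assoc]
  refine ⟨key, ?_⟩
  rw [key, Matrix.mulVec_sub, Matrix.sub_mulVec, ← Matrix.mulVec_mulVec φ (Xi X B γ κ)]
  abel
end
end
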